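/- arXiv:2005.09269 — 2 statements merged into one kernel-verified Lean document; each statement's English description precedes it below -/
import Mathlib

section
/- Let H = {rrr, bbr, yyr} (the patterns: a monochromatic red triangle, a triangle with two blue edges and one red edge, and a triangle with two yellow edges and one red edge). Then for every integer n ≥ 3, h_2(n, H) = ⌈n/2⌉. -/
/-- The three edge colors: red, blue, yellow. -/
inductive Col : Type
  | r | b | y
  deriving DecidableEq

/-- A (symmetric) 3-edge-coloring of the complete graph `K_n` on vertex set `Fin n`. -/
structure Coloring (n : ℕ) where
  col : Fin n → Fin n → Col
  symm : ∀ i j, col i j = col j i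

/-- The pattern (multiset of edge colors) of the triangle on vertices `u, v, w`. -/
def triPattern {n : ℕ} (c : Coloring n) (u v w : Fin n) : Multiset Col :=
  {c.col u v, c.col v w, c.col u w}

/-- The coloring `c` contains the pattern `P`: some triangle has color multiset `P`. -/
def Contains {n : ℕ} (c : Coloring n) (P : Multiset Col) : Prop :=
  ∃ u v w : Fin n, u ≠ v ∧ v ≠ w ∧ u ≠ w ∧ triPattern c u v w = P

/-- The coloring `c` avoids every pattern in the family `H`. -/
def Avoids {n : ℕ} (c : Coloring n) (H : Set (Multiset Col)) : Prop :=
  ∀ P ∈ H, ¬ Contains c P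

/-- A vertex set `S` is two-colored under `c`: the edges inside `S` use at most
two of the three colors, i.e. some color is missing on the edges inside `S`. -/
def TwoColored {n : ℕ} (c : Coloring n) (S : Finset (Fin n)) : Prop :=
  ∃ x : Col, ∀ i ∈ S, ∀ j ∈ S, i ≠ j → c.col i j ≠ x

/-- `h2 c` is the maximum size of a vertex set whose induced edges use at most
two of the three colors. -/
noncomputable def h2 {n : ℕ} (c : Coloring n) : ℕ :=
  sSup {k | ∃ S : Finset (Fin n), TwoColored c S ∧ S.card = k}

/-- `h2n n H = min { h2 c : c a 3-edge-coloring of K_n avoiding all patterns in H }`. -/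
noncomputable def h2n (n : ℕ) (H : Set (Multiset Col)) : ℕ :=
  sInf {m | ∃ c : Coloring n, Avoids c H ∧ h2 c = m}

/-- Pattern abbreviations. -/
def Prrr : Multiset Col := {Col.r, Col.r, Col.r}
def Pbbb : Multiset Col := {Col.b, Col.b, Col.b}
def Pyyy : Multiset Col := {Col.y, Col.y, Col.y}
def Prrb : Multiset Col := {Col.r, Col.r, Col.b}
def Prry : Multiset Col := {Col.r, Col.r, Col.y}
def Pbbr : Multiset Col := {Col.b, Col.b, Col.r}
def Pbby : Multiset Col := {Col.b, Col.b, Col.y}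
def Pyyr : Multiset Col := {Col.y, Col.y, Col.r}
def Pyyb : Multiset Col := {Col.y, Col.y, Col.b}
def Prby : Multiset Col := {Col.r, Col.b, Col.y}

lemma walk_cut {V : Type*} (G : SimpleGraph V) (f : ℕ → V) (i p : ℕ) (hp : 0 < p)
    (h : ∀ t, t + 1 < p → G.Adj (f (i + t)) (f (i + t + 1)))
    (hl : G.Adj (f (i + (p - 1))) (f i)) :
    ∃ g : ℕ → V, (∀ t, G.Adj (g t) (g (t + 1))) ∧ ∀ t, g (t + p) = g t := by
  refine ⟨fun t => f (i + t % p), fun t => ?_, fun t => by simp⟩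
  have hlt := Nat.mod_lt t hp
  by_cases hc : t % p + 1 < p
  · have : (t + 1) % p = t % p + 1 := by
      rw [Nat.add_mod, Nat.mod_eq_of_lt (show 1 < p by omega), Nat.mod_eq_of_lt hc]
    simp only [this]
    exact h _ hc
  · have h1 : t % p = p - 1 := by omega
    have : (t + 1) % p = 0 := by
      rw [← Nat.mod_add_mod, h1, Nat.sub_add_cancel hp, Nat.mod_self]
    simp only [this, h1]
    simpa using hl

lemma no_odd {n : ℕ} (c : Coloring n) (G : SimpleGraph (Fin n))
    (hG : ∀ u v, G.Adj u v ↔ u ≠ v ∧ c.col u v = Col.r)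
    (hA : ∀ u v w, G.Adj u v → w ≠ u → w ≠ v → c.col w u ≠ c.col w v) (k : ℕ) :
    Odd k → ¬ ∃ f : ℕ → Fin n, (∀ t, G.Adj (f t) (f (t + 1))) ∧ ∀ t, f (t + k) = f t := by
  induction k using Nat.strong_induction_on with
  | _ k ih =>
  rintro hk ⟨f, hf, hp⟩
  have hk2 : k % 2 = 1 := Nat.odd_iff.mp hk
  have hne1 : k ≠ 1 := by
    rintro rfl
    have := hf 0
    have h2 := hp 0
    rw [h2] at this
    exact G.irrefl this
  -- chords
  have hch : ∀ i j, 2 ≤ j → j + 2 ≤ k → f i ≠ f (i + j) ∧ ¬ G.Adj (f i) (f (i + j)) := by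
    intro i j h2 hjk
    have hik : f (i + j + (k - j)) = f i := by rw [← hp i]; congr 1; omega
    constructor
    · intro he
      rcases Nat.even_or_odd j with hj | hj
      · refine ih (k - j) (by omega) (by rw [Nat.odd_iff]; rw [Nat.even_iff] at hj; omega)
          (walk_cut G f (i + j) (k - j) (by omega) (fun t _ => hf _) ?_)
        have := hf (i + j + (k - j - 1))
        rw [show i + j + (k - j - 1) + 1 = i + j + (k - j) by omega, hik, he] at this
        exact this
      · refine ih j (by omega) hj (walk_cut G f i j (by omega) (fun t _ => hf _) ?_)
        have := hf (i + (j - 1))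
        rw [show i + (j - 1) + 1 = i + j by omega, ← he] at this
        exact this
    · intro he
      rcases Nat.even_or_odd j with hj | hj
      · refine ih (j + 1) (by omega) hj.add_one
          (walk_cut G f i (j + 1) (by omega) (fun t _ => hf _) ?_)
        simpa using he.symm
      · refine ih (k - j + 1) (by rw [Nat.odd_iff] at hj; omega)
          (by rw [Nat.odd_iff] at hj ⊢; omega)
          (walk_cut G f (i + j) (k - j + 1) (by omega) (fun t _ => hf _) ?_)
        rw [Nat.add_sub_cancel, hik]
        exact he
  have hne3 : k ≠ 3 := by
    rintro rfl
    have h0 := hf 0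
    have h1 := hf 1
    have h2 := hf 2
    have h3 := hp 0
    simp only [Nat.zero_add, Nat.reduceAdd] at h0 h1 h2 h3
    rw [h3] at h2
    refine hA _ _ _ h0 h2.ne h1.ne' ?_
    rw [((hG _ _).1 h2).2, ((hG _ _).1 h1.symm).2]
  have hk5 : 5 ≤ k := by omega
  have hnr : ∀ i j, 2 ≤ j → j + 2 ≤ k → c.col (f i) (f (i + j)) ≠ Col.r := by
    intro i j h2 hjk he
    have := hch i j h2 hjk
    exact this.2 ((hG _ _).2 ⟨this.1, he⟩)
  have halt : ∀ i j, j + 4 ≤ k → (c.col (f i) (f (i + 2)) = c.col (f i) (f (i + (j + 2))) ↔ Even j) := by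
    intro i j
    induction j with
    | zero => simp
    | succ j ihj =>
      intro hj
      have h1 := ihj (by omega)
      have a := hnr i 2 (by omega) (by omega)
      have b := hnr i (j + 2) (by omega) (by omega)
      have d := hnr i (j + 1 + 2) (by omega) (by omega)
      have e := hA _ _ (f i) (hf (i + (j + 2))) (hch i (j + 2) (by omega) (by omega)).1
        (hch i (j + 1 + 2) (by omega) (by omega)).1
      rw [show i + (j + 2) + 1 = i + (j + 1 + 2) by omega] at e
      rw [Nat.even_add_one, ← h1]
      revert a b d e
      generalize c.col (f i) (f (i + 2)) = x
      generalize c.col (f i) (f (i + (j + 2))) = y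
      generalize c.col (f i) (f (i + (j + 1 + 2))) = z
      cases x <;> cases y <;> cases z <;> simp
  let g : ℕ → Prop := fun i => c.col (f i) (f (i + 2)) = Col.b
  have hg : ∀ i, g (i + (k - 2)) ↔ ¬ g i := by
    intro i
    have h1 := halt i (k - 4) (by omega)
    have h2 : ¬ Even (k - 4) := by rw [Nat.even_iff]; omega
    rw [show k - 4 + 2 = k - 2 by omega] at h1
    have a := hnr i 2 (by omega) (by omega)
    have b := hnr i (k - 2) (by omega) (by omega)
    have e : c.col (f (i + (k - 2))) (f (i + (k - 2) + 2)) = c.col (f i) (f (i + (k - 2))) := by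
      rw [c.symm, show i + (k - 2) + 2 = i + k by omega, hp]
    simp only [g, e]
    have h3 := fun h => h2 (h1.1 h)
    revert h3 a b
    generalize c.col (f i) (f (i + 2)) = x
    generalize c.col (f i) (f (i + (k - 2))) = y
    cases x <;> cases y <;> simp
  have hit : ∀ m, (g (m * (k - 2)) ↔ (g 0 ↔ Even m)) := by
    intro m
    induction m with
    | zero => simp
    | succ m ihm =>
      rw [Nat.succ_mul, hg, ihm, Nat.even_add_one]
      tauto
  have hpm : ∀ m t, f (t + k * m) = f t := by
    intro m t
    induction m with
    | zero => simp
    | succ m ihm => rw [Nat.mul_succ, ← Nat.add_assoc, hp, ihm]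
  have h1 := hit k
  have h2 : g (k * (k - 2)) ↔ g 0 := by
    have a := hpm (k - 2) 0
    have b := hpm (k - 2) 2
    simp only [Nat.zero_add] at a
    simp only [g, a, Nat.zero_add]
    rw [Nat.add_comm, b]
  have h3 : ¬ Even k := Nat.not_even_iff_odd.2 hk
  tauto

lemma h2_bdd {n : ℕ} (c : Coloring n) :
    BddAbove {k | ∃ S : Finset (Fin n), TwoColored c S ∧ S.card = k} := by
  refine ⟨n, ?_⟩
  rintro k ⟨S, -, rfl⟩
  simpa using S.card_le_univ

lemma lower {n : ℕ} (c : Coloring n) (hc : Avoids c {Prrr, Pbbr, Pyyr}) : (n + 1) / 2 ≤ h2 c := by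
  let G : SimpleGraph (Fin n) :=
    { Adj := fun u v => u ≠ v ∧ c.col u v = Col.r
      symm := ⟨fun u v h => ⟨h.1.symm, by rw [c.symm]; exact h.2⟩⟩
      loopless := ⟨fun u h => h.1 rfl⟩ }
  have hG : ∀ u v, G.Adj u v ↔ u ≠ v ∧ c.col u v = Col.r := fun _ _ => Iff.rfl
  have hA : ∀ u v w, G.Adj u v → w ≠ u → w ≠ v → c.col w u ≠ c.col w v := by
    intro u v w h hu hv he
    have h1 := hc Prrr (by simp)
    have h2 := hc Pbbr (by simp)
    have h3 := hc Pyyr (by simp)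
    have key : triPattern c u w v = {c.col w u, c.col w u, Col.r} := by
      rw [triPattern, c.symm u w, ← he, h.2]
    have hall : ∀ P, triPattern c u w v = P → Contains c P := fun P hP =>
      ⟨u, w, v, hu.symm, hv, h.1, hP⟩
    rw [key] at hall
    cases hx : c.col w u <;> rw [hx] at hall
    · exact h1 (hall _ rfl)
    · exact h2 (hall _ rfl)
    · exact h3 (hall _ rfl)
  have hcol : G.Colorable 2 := by
    rw [SimpleGraph.two_colorable_iff_forall_loop_even]
    intro u w
    by_contra hodd
    rw [Nat.not_even_iff_odd] at hodd
    have hpos : 0 < w.length := hodd.pos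
    refine no_odd c G hG hA w.length hodd
      (walk_cut G w.getVert 0 w.length hpos (fun t ht => ?_) ?_)
    · rw [Nat.zero_add]
      exact w.adj_getVert_succ (by omega)
    · have := w.adj_getVert_succ (i := w.length - 1) (by omega)
      rw [Nat.sub_add_cancel hpos, w.getVert_length] at this
      simpa using this
  obtain ⟨C⟩ := hcol
  have hT : ∀ a, TwoColored c (Finset.univ.filter fun v => C v = a) := by
    intro a
    refine ⟨Col.r, fun i hi j hj hij he => ?_⟩
    simp only [Finset.mem_filter, Finset.mem_univ, true_and] at hi hj
    exact C.valid ((hG i j).2 ⟨hij, he⟩) (hi.trans hj.symm)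
  have hle : ∀ a, (Finset.univ.filter fun v => C v = a).card ≤ h2 c :=
    fun a => le_csSup (h2_bdd c) ⟨_, hT a, rfl⟩
  have hsum : (Finset.univ : Finset (Fin n)).card
      = ∑ a : Fin 2, (Finset.univ.filter fun v => C v = a).card :=
    Finset.card_eq_sum_card_fiberwise (fun _ _ => Finset.mem_coe.2 (Finset.mem_univ _))
  rw [Fin.sum_univ_two, Finset.card_univ, Fintype.card_fin] at hsum
  have := hle 0
  have := hle 1
  omega

/-- The extremal coloring. -/
def extCol (n : ℕ) : Coloring n where
  col i j := if i.1 / 2 = j.1 / 2 then Col.r else if i.1 % 2 = j.1 % 2 then Col.b else Col.y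
  symm i j := by simp only [eq_comm]

lemma ext_red {n : ℕ} {i j : Fin n} : (extCol n).col i j = Col.r ↔ i.1 / 2 = j.1 / 2 := by
  simp only [extCol]; split_ifs <;> simp_all

lemma ext_blue {n : ℕ} {i j : Fin n} :
    (extCol n).col i j = Col.b ↔ i.1 / 2 ≠ j.1 / 2 ∧ i.1 % 2 = j.1 % 2 := by
  simp only [extCol]; split_ifs <;> simp_all

lemma ext_yellow {n : ℕ} {i j : Fin n} :
    (extCol n).col i j = Col.y ↔ i.1 / 2 ≠ j.1 / 2 ∧ i.1 % 2 ≠ j.1 % 2 := by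
  simp only [extCol]; split_ifs <;> simp_all

lemma pat_cases {x y z a : Col} (h : ({x, y, z} : Multiset Col) = {a, a, Col.r}) :
    (x = Col.r ∧ y = z) ∨ (y = Col.r ∧ x = z) ∨ (z = Col.r ∧ x = y) := by
  revert h
  cases x <;> cases y <;> cases z <;> cases a <;> decide

lemma ext_avoids (n : ℕ) : Avoids (extCol n) {Prrr, Pbbr, Pyyr} := by
  have key : ∀ u v w : Fin n, u ≠ v → v ≠ w → u ≠ w → (extCol n).col u v = Col.r →
      (extCol n).col u w ≠ (extCol n).col v w := by
    intro u v w huv hvw huw h he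
    rw [ext_red] at h
    have h1 : u.1 ≠ v.1 := fun h => huv (Fin.ext h)
    have h2 : v.1 ≠ w.1 := fun h => hvw (Fin.ext h)
    have h3 : u.1 ≠ w.1 := fun h => huw (Fin.ext h)
    cases hx : (extCol n).col v w <;> rw [hx] at he
    · rw [ext_red] at he hx; omega
    · rw [ext_blue] at he hx; omega
    · rw [ext_yellow] at he hx; omega
  have main : ∀ a, ¬ Contains (extCol n) {a, a, Col.r} := by
    rintro a ⟨u, v, w, huv, hvw, huw, hP⟩
    rcases pat_cases hP with ⟨h, e⟩ | ⟨h, e⟩ | ⟨h, e⟩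
    · exact key u v w huv hvw huw h e.symm
    · refine key v w u hvw huw.symm huv.symm h ?_
      rw [(extCol n).symm v u, (extCol n).symm w u]; exact e
    · refine key u w v huw hvw.symm huv h ?_
      rw [(extCol n).symm w v]; exact e
  intro P hP
  simp only [Set.mem_insert_iff, Set.mem_singleton_iff] at hP
  rcases hP with rfl | rfl | rfl
  · exact main Col.r
  · exact main Col.b
  · exact main Col.y

lemma ext_upper (n : ℕ) (hn : 3 ≤ n) (S : Finset (Fin n)) (hS : TwoColored (extCol n) S) :
    S.card ≤ (n + 1) / 2 := by
  have half : (∀ i ∈ S, ∀ j ∈ S, i.1 / 2 = j.1 / 2 → i = j) → S.card ≤ (n + 1) / 2 := by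
    intro h
    have := Finset.card_le_card_of_injOn (s := S) (t := Finset.range ((n + 1) / 2))
      (fun i => i.1 / 2) (fun i _ => by
        have := i.2
        simp only [Finset.coe_range, Set.mem_Iio]; omega) (fun i hi j hj e => h i hi j hj e)
    simpa using this
  have par : (∀ i ∈ S, ∀ j ∈ S, i.1 % 2 = j.1 % 2 → i = j) → S.card ≤ (n + 1) / 2 := by
    intro h
    have := Finset.card_le_card_of_injOn (s := S) (t := Finset.range 2)
      (fun i => i.1 % 2) (fun i _ => by
        simp only [Finset.coe_range, Set.mem_Iio]; omega) (fun i hi j hj e => h i hi j hj e)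
    rw [Finset.card_range] at this
    omega
  obtain ⟨x, hx⟩ := hS
  cases x
  · refine half fun i hi j hj e => ?_
    by_contra hij
    exact hx i hi j hj hij (ext_red.2 e)
  · refine par fun i hi j hj e => ?_
    by_contra hij
    refine hx i hi j hj hij (ext_blue.2 ⟨fun h => hij (Fin.ext (by omega)), e⟩)
  · have hy : ∀ i ∈ S, ∀ j ∈ S, i.1 % 2 ≠ j.1 % 2 → i.1 / 2 = j.1 / 2 := by
      intro i hi j hj e
      by_contra h
      exact hx i hi j hj (fun h => e (by rw [h])) (ext_yellow.2 ⟨h, e⟩)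
    by_cases hs : ∀ i ∈ S, ∀ j ∈ S, i.1 % 2 = j.1 % 2
    · refine half fun i hi j hj e => Fin.ext ?_
      have := hs i hi j hj
      omega
    · push Not at hs
      obtain ⟨p, hp, q, hq, hpq⟩ := hs
      refine par fun i hi j hj e => Fin.ext ?_
      have h1 := hy i hi p hp
      have h2 := hy i hi q hq
      have h3 := hy j hj p hp
      have h4 := hy j hj q hq
      have h5 := hy p hp q hq hpq
      omega

theorem stmt15 (n : ℕ) (hn : 3 ≤ n) :
    h2n n {Prrr, Pbbr, Pyyr} = (n + 1) / 2 := by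
  have hext : h2 (extCol n) ≤ (n + 1) / 2 := by
    refine csSup_le ⟨0, ∅, ⟨Col.r, by simp⟩, rfl⟩ ?_
    rintro k ⟨S, hS, rfl⟩
    exact ext_upper n hn S hS
  apply le_antisymm
  · refine le_trans (Nat.sInf_le ?_) hext
    exact ⟨extCol n, ext_avoids n, rfl⟩
  · refine le_csInf ⟨_, extCol n, ext_avoids n, rfl⟩ ?_
    rintro m ⟨c, hc, rfl⟩
    exact lower c hc
end

section
/- Let H = {rrr, bbr, yyb} (the patterns: a monochromatic red triangle, a triangle with two blue edges and one red edge, and a triangle with two yellow edges and one blue edge). Then for every integer n ≥ 7, h_2(n, H) = ⌈3n/7⌉ + ε1(n), where ε1(n) = 1 if n ≡ 2 (mod 7) and ε1(n) = 0 otherwise. -/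
/-- Allowed color triples. -/
def ok (a b c : Col) : Bool :=
  match a, b, c with
  | .r, .r, .r => false
  | .b, .b, .r => false
  | .b, .r, .b => false
  | .r, .b, .b => false
  | .y, .y, .b => false
  | .y, .b, .y => false
  | .b, .y, .y => false
  | _, _, _ => true

theorem ok_iff (a b c : Col) :
    ok a b c = true ↔ (({a, b, c} : Multiset Col) ≠ Prrr ∧ ({a, b, c} : Multiset Col) ≠ Pbbr ∧
      ({a, b, c} : Multiset Col) ≠ Pyyb) := by
  cases a <;> cases b <;> cases c <;> decide

theorem avoids_iff {n : ℕ} (c : Coloring n) :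
    Avoids c {Prrr, Pbbr, Pyyb} ↔
      ∀ u v w, u ≠ v → v ≠ w → u ≠ w → ok (c.col u v) (c.col v w) (c.col u w) = true := by
  constructor
  · intro h u v w h1 h2 h3
    rw [ok_iff]
    refine ⟨fun e => ?_, fun e => ?_, fun e => ?_⟩
    · exact h Prrr (by simp) ⟨u, v, w, h1, h2, h3, e⟩
    · exact h Pbbr (by simp) ⟨u, v, w, h1, h2, h3, e⟩
    · exact h Pyyb (by simp) ⟨u, v, w, h1, h2, h3, e⟩
  · rintro h P hP ⟨u, v, w, h1, h2, h3, e⟩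
    have := (ok_iff _ _ _).1 (h u v w h1 h2 h3)
    unfold triPattern at e
    simp only [Set.mem_insert_iff, Set.mem_singleton_iff] at hP
    rcases hP with rfl | rfl | rfl
    · exact this.1 e
    · exact this.2.1 e
    · exact this.2.2 e

/-- The coloring of K_7 by circular distance. -/
def zc (i j : Fin 7) : Col :=
  if i - j = 1 ∨ j - i = 1 then .r else if i - j = 2 ∨ j - i = 2 then .b else .y

theorem zc_symm (i j : Fin 7) : zc i j = zc j i := by
  revert i j; decide

theorem zc_ok : ∀ i j k : Fin 7, ok (zc i j) (zc j k) (zc i k) = true := by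
  decide

theorem card_le_h2 {n : ℕ} (c : Coloring n) (S : Finset (Fin n)) (h : TwoColored c S) :
    S.card ≤ h2 c := by
  unfold h2
  apply le_csSup
  · refine ⟨n, ?_⟩
    rintro k ⟨T, _, rfl⟩
    simpa using Finset.card_le_univ T
  · exact ⟨S, h, rfl⟩

theorem h2_le {n : ℕ} (c : Coloring n) (m : ℕ) (h : ∀ S, TwoColored c S → S.card ≤ m) :
    h2 c ≤ m := by
  unfold h2
  apply csSup_le
  · exact ⟨0, ∅, ⟨.r, by simp⟩, rfl⟩
  · rintro k ⟨T, hT, rfl⟩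
    exact h T hT

/-- If the `x`-colored graph is bipartite then `h2` is at least half. -/
theorem half_of_bip {n : ℕ} (c : Coloring n) (x : Col) (A : Fin n → Prop)
    (h1 : ∀ u v, u ≠ v → A u → A v → c.col u v ≠ x)
    (h2' : ∀ u v, u ≠ v → ¬ A u → ¬ A v → c.col u v ≠ x) : n ≤ 2 * h2 c := by
  classical
  have a := card_le_h2 c (Finset.univ.filter A) ⟨x, by
    intro i hi j hj hij; simp at hi hj; exact h1 i j hij hi hj⟩
  have b := card_le_h2 c (Finset.univ.filter (fun v => ¬ A v)) ⟨x, by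
    intro i hi j hj hij; simp at hi hj; exact h2' i j hij hi hj⟩
  have := Finset.card_filter_add_card_filter_not (s := (Finset.univ : Finset (Fin n))) A
  simp only [Finset.card_univ, Fintype.card_fin] at this
  omega

/-- The coloring avoids the three patterns. -/
def Good {n : ℕ} (c : Coloring n) : Prop :=
  ∀ u v w, u ≠ v → v ≠ w → u ≠ w → ok (c.col u v) (c.col v w) (c.col u w) = true

theorem half_of_blue_triangle {n : ℕ} (c : Coloring n) (H : Good c)
    (a b d : Fin n) (hab : a ≠ b) (hbd : b ≠ d) (had : a ≠ d)
    (c1 : c.col a b = .b) (c2 : c.col b d = .b) (c3 : c.col a d = .b) : n ≤ 2 * h2 c := by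
  have key : ∀ u, u ≠ a → u ≠ b → u ≠ d →
      ok (c.col u a) .b (c.col u b) = true ∧ ok (c.col u b) .b (c.col u d) = true ∧
      ok (c.col u a) .b (c.col u d) = true := by
    intro u h1 h2 h3
    have e1 := H u a b h1 hab h2
    have e2 := H u b d h2 hbd h3
    have e3 := H u a d h1 had h3
    rw [c1] at e1; rw [c2] at e2; rw [c3] at e3
    exact ⟨e1, e2, e3⟩
  have tri : ∀ u v w, u ≠ v → w ≠ u → w ≠ v → c.col u v = .r →
      ok (c.col u w) .r (c.col v w) = true := by
    intro u v w h1 h2 h3 h4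
    have := H w u v h2 h1 h3
    rwa [h4, c.symm w u, c.symm w v] at this
  refine half_of_bip c .r (fun u => u ≠ a ∧ u ≠ b ∧ u ≠ d ∧ (c.col u a = .r ∨ c.col u b = .r)) ?_ ?_
  · rintro u v huv ⟨u1, u2, u3, u4⟩ ⟨v1, v2, v3, v4⟩ hr
    obtain ⟨k1, k2, k3⟩ := key u u1 u2 u3
    obtain ⟨l1, l2, l3⟩ := key v v1 v2 v3
    have t1 := tri u v a huv u1.symm v1.symm hr
    have t2 := tri u v b huv u2.symm v2.symm hr
    have t3 := tri u v d huv u3.symm v3.symm hr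
    revert k1 k2 k3 l1 l2 l3 t1 t2 t3 u4 v4
    cases c.col u a <;> cases c.col u b <;> cases c.col u d <;> cases c.col v a <;>
      cases c.col v b <;> cases c.col v d <;> simp [ok]
  · intro u v huv u4 v4 hr
    have side : ∀ u, u ≠ a → u ≠ b → u ≠ d →
        ¬ (u ≠ a ∧ u ≠ b ∧ u ≠ d ∧ (c.col u a = .r ∨ c.col u b = .r)) →
        c.col u a ≠ .r ∧ c.col u b ≠ .r ∧ c.col u d ≠ .r := by
      intro u u1 u2 u3 u4
      obtain ⟨k1, k2, k3⟩ := key u u1 u2 u3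
      have u4' : c.col u a ≠ .r ∧ c.col u b ≠ .r := by tauto
      clear u4
      revert k1 k2 k3 u4'
      cases c.col u a <;> cases c.col u b <;> cases c.col u d <;> simp [ok]
    by_cases hu : u = a ∨ u = b ∨ u = d
    · by_cases hv : v = a ∨ v = b ∨ v = d
      · have s1 := c.symm a b
        have s2 := c.symm b d
        have s3 := c.symm a d
        rcases hu with rfl | rfl | rfl <;> rcases hv with rfl | rfl | rfl <;> simp_all
      · push Not at hv
        obtain ⟨v1, v2, v3⟩ := hv
        have := side v v1 v2 v3 v4
        rw [c.symm] at hr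
        rcases hu with rfl | rfl | rfl
        · exact this.1 hr
        · exact this.2.1 hr
        · exact this.2.2 hr
    · push Not at hu
      obtain ⟨u1, u2, u3⟩ := hu
      have su := side u u1 u2 u3 u4
      by_cases hv : v = a ∨ v = b ∨ v = d
      · rcases hv with rfl | rfl | rfl
        · exact su.1 hr
        · exact su.2.1 hr
        · exact su.2.2 hr
      · push Not at hv
        obtain ⟨v1, v2, v3⟩ := hv
        have sv := side v v1 v2 v3 v4
        obtain ⟨k1, k2, k3⟩ := key u u1 u2 u3
        obtain ⟨l1, l2, l3⟩ := key v v1 v2 v3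
        have t1 := tri u v a huv u1.symm v1.symm hr
        have t2 := tri u v b huv u2.symm v2.symm hr
        have t3 := tri u v d huv u3.symm v3.symm hr
        clear u4 v4
        revert k1 k2 k3 l1 l2 l3 t1 t2 t3 su sv
        cases c.col u a <;> cases c.col u b <;> cases c.col u d <;> cases c.col v a <;>
          cases c.col v b <;> cases c.col v d <;> simp [ok]

/-- The blue graph. -/
def blueGraph {n : ℕ} (c : Coloring n) : SimpleGraph (Fin n) where
  Adj u v := u ≠ v ∧ c.col u v = .b
  symm := ⟨by
    intro u v h
    exact ⟨h.1.symm, by rw [c.symm]; exact h.2⟩⟩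
  loopless := ⟨fun u h => h.1 rfl⟩

theorem exists_cycle_fun {V : Type*} (G : SimpleGraph V)
    (h : ∃ m, Odd m ∧ ∃ (u : V) (w : G.Walk u u), w.length = m) :
    ∃ (m : ℕ) (f : ℕ → V), Odd m ∧ (∀ i, f (i + m) = f i) ∧ (∀ i, G.Adj (f i) (f (i + 1))) ∧
      ∀ i k, 2 ≤ k → k + 2 ≤ m → f i ≠ f (i + k) ∧ ¬ G.Adj (f i) (f (i + k)) := by
  classical
  obtain ⟨hodd, u, w, hw⟩ := Nat.find_spec h
  have hmin : ∀ k, k < Nat.find h → Odd k → ∀ (u : V) (w : G.Walk u u), w.length ≠ k := by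
    intro k hk ho u w hl
    exact Nat.find_min h hk ⟨ho, u, w, hl⟩
  generalize Nat.find h = m at *
  have hm : 0 < m := hodd.pos
  have hper : ∀ i, w.getVert ((i + m) % m) = w.getVert (i % m) := by
    intro i; simp
  have hadj : ∀ i, G.Adj (w.getVert (i % m)) (w.getVert ((i + 1) % m)) := by
    intro i
    have hlt := Nat.mod_lt i hm
    have h1 := w.adj_getVert_succ (i := i % m) (by omega)
    by_cases hk : i % m + 1 < m
    · have : (i + 1) % m = i % m + 1 := by
        rw [Nat.add_mod, Nat.mod_eq_of_lt (a := 1) (by omega), Nat.mod_eq_of_lt hk]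
      rw [this]; exact h1
    · have e : i % m + 1 = m := by omega
      have : (i + 1) % m = 0 := by
        rw [← Nat.mod_add_mod, e, Nat.mod_self]
      rw [this]
      rw [e, ← hw, w.getVert_length, hw] at h1
      simpa using h1
  obtain ⟨f, hf⟩ : ∃ f : ℕ → V, f = fun i => w.getVert (i % m) := ⟨_, rfl⟩
  have hper' : ∀ i, f (i + m) = f i := by intro i; rw [hf]; exact hper i
  have hadj' : ∀ i, G.Adj (f i) (f (i + 1)) := by intro i; rw [hf]; exact hadj i
  have hwalk : ∀ i k, ∃ p : G.Walk (f i) (f (i + k)), p.length = k := by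
    intro i k
    induction k with
    | zero => exact ⟨SimpleGraph.Walk.nil, rfl⟩
    | succ k ih =>
      obtain ⟨p, hp⟩ := ih
      exact ⟨p.concat (hadj' (i + k)), by rw [SimpleGraph.Walk.length_concat, hp]⟩
  refine ⟨m, f, hodd, hper', hadj', ?_⟩
  intro i k hk2 hkm
  obtain ⟨p, hp⟩ := hwalk i k
  obtain ⟨q, hq⟩ := hwalk (i + k) (m - k)
  have e : f (i + k + (m - k)) = f i := by
    rw [← hper' i]; congr 1; omega
  rw [e] at q
  obtain ⟨q, hq⟩ : ∃ q : G.Walk (f (i + k)) (f i), q.length = m - k := by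
    have := hwalk (i + k) (m - k)
    rwa [e] at this
  constructor
  · intro heq
    rcases Nat.even_or_odd k with he | ho
    · exact hmin (m - k) (by omega) (Nat.Odd.sub_even (by omega) hodd he) _ (q.copy rfl heq)
        (by simpa using hq)
    · exact hmin k (by omega) ho _ (p.copy rfl heq.symm) (by simpa using hp)
  · intro ha
    rcases Nat.even_or_odd k with he | ho
    · exact hmin (k + 1) (by omega) he.add_one _ (p.concat ha.symm)
        (by rw [SimpleGraph.Walk.length_concat, hp])
    · exact hmin (m - k + 1) (by omega) (Nat.Odd.sub_odd hodd ho).add_one _ (q.concat ha)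
        (by rw [SimpleGraph.Walk.length_concat, hq])

/-- `f` embeds the circular coloring. -/
def Has7 {n : ℕ} (c : Coloring n) : Prop :=
  ∃ g : Fin 7 → Fin n, Function.Injective g ∧ ∀ i j, i ≠ j → c.col (g i) (g j) = zc i j

theorem half_or_has7 {n : ℕ} (c : Coloring n) (H : Good c) : n ≤ 2 * h2 c ∨ Has7 c := by
  by_cases h : ∃ m, Odd m ∧ ∃ (u : Fin n) (w : (blueGraph c).Walk u u), w.length = m
  swap
  · left
    have h2c : (blueGraph c).Colorable 2 := by
      rw [SimpleGraph.two_colorable_iff_forall_loop_even]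
      intro u w
      by_contra hne
      exact h ⟨w.length, by simpa using hne, u, w, rfl⟩
    obtain ⟨C⟩ := h2c
    refine half_of_bip c .b (fun u => C u = 0) ?_ ?_
    · intro u v huv hu hv hb
      exact C.valid (show (blueGraph c).Adj u v from ⟨huv, hb⟩) (hu.trans hv.symm)
    · intro u v huv hu hv hb
      have := C.valid (show (blueGraph c).Adj u v from ⟨huv, hb⟩)
      omega
  obtain ⟨m, f, hodd, hper, hadj, hch⟩ := exists_cycle_fun _ h
  by_cases hT : ∃ a b d : Fin n, a ≠ b ∧ b ≠ d ∧ a ≠ d ∧ c.col a b = .b ∧ c.col b d = .b ∧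
      c.col a d = .b
  · obtain ⟨a, b, d, h1, h2, h3, h4, h5, h6⟩ := hT
    exact Or.inl (half_of_blue_triangle c H a b d h1 h2 h3 h4 h5 h6)
  right
  have d1 : ∀ i, c.col (f i) (f (i + 1)) = .b := fun i => (hadj i).2
  have n1 : ∀ i, f i ≠ f (i + 1) := fun i => (hadj i).1
  have nk : ∀ i k, 2 ≤ k → k + 2 ≤ m → f i ≠ f (i + k) := fun i k a b => (hch i k a b).1
  have bk : ∀ i k, 2 ≤ k → k + 2 ≤ m → c.col (f i) (f (i + k)) ≠ .b :=
    fun i k a b hb => (hch i k a b).2 ⟨nk i k a b, hb⟩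
  have hm1 : m ≠ 1 := by
    rintro rfl
    exact n1 0 (hper 0).symm
  have hm3 : m ≠ 3 := by
    rintro rfl
    refine hT ⟨f 0, f 1, f 2, n1 0, n1 1, ?_, d1 0, d1 1, ?_⟩
    · rw [← hper 0]; exact (n1 2).symm
    · rw [← hper 0, c.symm]; exact d1 2
  have hm5 : 5 ≤ m := by
    obtain ⟨k, rfl⟩ := hodd; omega
  have d2 : ∀ i, c.col (f i) (f (i + 2)) = .y := by
    intro i
    have := H (f i) (f (i + 1)) (f (i + 2)) (n1 i) (n1 (i + 1)) (nk i 2 le_rfl (by omega))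
    rw [d1 i, d1 (i + 1)] at this
    have hb := bk i 2 le_rfl (by omega)
    revert this hb
    cases c.col (f i) (f (i + 2)) <;> simp [ok]
  have hm5' : m ≠ 5 := by
    rintro rfl
    have := H (f 0) (f 2) (f 3) (nk 0 2 (by omega) (by omega)) (n1 2) (nk 0 3 (by omega) (by omega))
    have e : c.col (f 0) (f 3) = .y := by
      rw [← hper 0, c.symm]; exact d2 3
    rw [d2 0, d1 2, e] at this
    simp [ok] at this
  have hm7 : 7 ≤ m := by
    obtain ⟨k, rfl⟩ := hodd; omega
  -- `y` at `k` forces `r` at `k+1`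
  have step1 : ∀ k, 2 ≤ k → k + 3 ≤ m → (∀ i, c.col (f i) (f (i + k)) = .y) →
      ∀ i, c.col (f i) (f (i + (k + 1))) = .r := by
    intro k hk hkm hy i
    have := H (f i) (f (i + k)) (f (i + (k + 1))) (nk i k hk (by omega)) (n1 (i + k))
      (nk i (k + 1) (by omega) (by omega))
    have e : c.col (f (i + k)) (f (i + (k + 1))) = .b := d1 (i + k)
    rw [hy, e] at this
    have hb := bk i (k + 1) (by omega) (by omega)
    revert this hb
    cases c.col (f i) (f (i + (k + 1))) <;> simp [ok]
  -- likewise backwards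
  have step1' : ∀ k, 2 ≤ k → k + 3 ≤ m → (∀ i, c.col (f i) (f (i + (k + 1))) = .y) →
      ∀ i, c.col (f i) (f (i + k)) = .r := by
    intro k hk hkm hy i
    have := H (f i) (f (i + k)) (f (i + (k + 1))) (nk i k hk (by omega)) (n1 (i + k))
      (nk i (k + 1) (by omega) (by omega))
    have e : c.col (f (i + k)) (f (i + (k + 1))) = .b := d1 (i + k)
    rw [hy, e] at this
    have hb := bk i k (by omega) (by omega)
    revert this hb
    cases c.col (f i) (f (i + k)) <;> simp [ok]
  have d3 : ∀ i, c.col (f i) (f (i + 3)) = .r := step1 2 le_rfl (by omega) d2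
  have step2 : ∀ k, 2 ≤ k → k + 5 ≤ m → (∀ i, c.col (f i) (f (i + k)) = .r) →
      ∀ i, c.col (f i) (f (i + (k + 3))) = .y := by
    intro k hk hkm hy i
    have := H (f i) (f (i + k)) (f (i + (k + 3))) (nk i k hk (by omega))
      (nk (i + k) 3 (by omega) (by omega))
      (nk i (k + 3) (by omega) (by omega))
    have e : c.col (f (i + k)) (f (i + (k + 3))) = .r := d3 (i + k)
    rw [hy, e] at this
    have hb := bk i (k + 3) (by omega) (by omega)
    revert this hb
    cases c.col (f i) (f (i + (k + 3))) <;> simp [ok]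
  have hm : m = 7 := by
    by_contra hne
    have hm9 : 9 ≤ m := by
      obtain ⟨k, rfl⟩ := hodd; omega
    have ind : ∀ t, 2 * t + 9 ≤ m → (∀ i, c.col (f i) (f (i + (2 * t + 6))) = .y) ∧
        ∀ i, c.col (f i) (f (i + (2 * t + 5))) = .r := by
      intro t
      induction t with
      | zero =>
        intro _
        have a := step2 3 (by omega) (by omega) d3
        exact ⟨a, step1' 5 (by omega) (by omega) a⟩
      | succ t ih =>
        intro ht
        obtain ⟨a, b⟩ := ih (by omega)
        exact ⟨step2 (2 * t + 5) (by omega) (by omega) b, step1 (2 * t + 6) (by omega) (by omega) a⟩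
    obtain ⟨k, hk⟩ := hodd
    obtain ⟨t, ht⟩ : ∃ t, m = 2 * t + 9 := ⟨k - 4, by omega⟩
    have a := (ind t (by omega)).1 0
    have b := d3 (0 + (2 * t + 6))
    have e : 0 + (2 * t + 6) + 3 = 0 + m := by omega
    rw [e, hper, c.symm, a] at b
    cases b
  subst hm
  have d4 : ∀ i, c.col (f i) (f (i + 4)) = .r := by
    intro i
    rw [← hper i, c.symm]; exact d3 (i + 4)
  have d5 : ∀ i, c.col (f i) (f (i + 5)) = .y := by
    intro i
    rw [← hper i, c.symm]; exact d2 (i + 5)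
  have d6 : ∀ i, c.col (f i) (f (i + 6)) = .b := by
    intro i
    rw [← hper i, c.symm]; exact d1 (i + 6)
  have nn : ∀ i k, 1 ≤ k → k ≤ 6 → f i ≠ f (i + k) := by
    intro i k h1 h2
    rcases (by omega : k = 1 ∨ k = 6 ∨ (2 ≤ k ∧ k + 2 ≤ 7)) with rfl | rfl | h
    · exact n1 i
    · rw [← hper i]; exact (n1 (i + 6)).symm
    · exact nk i k h.1 h.2
  have hlt : ∀ a b : Fin 7, a < b → f a ≠ f b ∧ c.col (f a) (f b) = zc (2 * a) (2 * b) := by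
    intro a b hab
    have e : (b : ℕ) = a + (b - a : ℕ) := by
      have : (a : ℕ) < b := hab
      omega
    constructor
    · rw [e]
      have : (a : ℕ) < b := hab
      exact nn _ _ (by omega) (by omega)
    · fin_cases a <;> fin_cases b <;> first
        | exact absurd hab (by decide)
        | exact d1 _
        | exact d2 _
        | exact d3 _
        | exact d4 _
        | exact d5 _
        | exact d6 _
  have hne : ∀ a b : Fin 7, a ≠ b → f a ≠ f b ∧ c.col (f a) (f b) = zc (2 * a) (2 * b) := by
    intro a b hab
    rcases lt_or_gt_of_ne hab with h | h
    · exact hlt a b h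
    · obtain ⟨x, y⟩ := hlt b a h
      exact ⟨x.symm, by rw [c.symm, zc_symm]; exact y⟩
  have inj4 : ∀ i j : Fin 7, i ≠ j → 4 * i ≠ 4 * j := by decide
  have back : ∀ i : Fin 7, 2 * (4 * i) = i := by decide
  refine ⟨fun i => f (4 * i : Fin 7), ?_, ?_⟩
  · intro i j hij
    by_contra hne'
    exact (hne _ _ (inj4 i j hne')).1 hij
  · intro i j hij
    have := (hne _ _ (inj4 i j hij)).2
    rwa [back, back] at this

instance : Fintype Col := ⟨{.r, .b, .y}, by intro x; cases x <;> decide⟩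

set_option maxRecDepth 100000 in
set_option maxHeartbeats 2000000 in
set_option synthInstance.maxHeartbeats 2000000 in
set_option synthInstance.maxSize 100000 in
theorem attach_aux : ∀ x0 x1 : Col, ok x0 (zc 0 1) x1 = true →
    ∀ x2 : Col, ok x0 (zc 0 2) x2 = true → ok x1 (zc 1 2) x2 = true →
    ∀ x3 : Col, ok x0 (zc 0 3) x3 = true → ok x1 (zc 1 3) x3 = true → ok x2 (zc 2 3) x3 = true →
    ∀ x4 : Col, ok x0 (zc 0 4) x4 = true → ok x1 (zc 1 4) x4 = true → ok x2 (zc 2 4) x4 = true →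
      ok x3 (zc 3 4) x4 = true →
    ∀ x5 : Col, ok x0 (zc 0 5) x5 = true → ok x1 (zc 1 5) x5 = true → ok x2 (zc 2 5) x5 = true →
      ok x3 (zc 3 5) x5 = true → ok x4 (zc 4 5) x5 = true →
    ∀ x6 : Col, ok x0 (zc 0 6) x6 = true → ok x1 (zc 1 6) x6 = true → ok x2 (zc 2 6) x6 = true →
      ok x3 (zc 3 6) x6 = true → ok x4 (zc 4 6) x6 = true → ok x5 (zc 5 6) x6 = true →
    ∃ i : Fin 7, ∀ j : Fin 7, j ≠ i → ![x0, x1, x2, x3, x4, x5, x6] j = zc i j := by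
  decide

theorem attach (x : Fin 7 → Col) (h : ∀ i j, i ≠ j → ok (x i) (zc i j) (x j) = true) :
    ∃ i, ∀ j, j ≠ i → x j = zc i j := by
  have e : ![x 0, x 1, x 2, x 3, x 4, x 5, x 6] = x := by
    funext i; fin_cases i <;> rfl
  have := attach_aux (x 0) (x 1) (h _ _ (by decide)) (x 2) (h _ _ (by decide)) (h _ _ (by decide))
    (x 3) (h _ _ (by decide)) (h _ _ (by decide)) (h _ _ (by decide))
    (x 4) (h _ _ (by decide)) (h _ _ (by decide)) (h _ _ (by decide)) (h _ _ (by decide))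
    (x 5) (h _ _ (by decide)) (h _ _ (by decide)) (h _ _ (by decide)) (h _ _ (by decide))
    (h _ _ (by decide))
    (x 6) (h _ _ (by decide)) (h _ _ (by decide)) (h _ _ (by decide)) (h _ _ (by decide))
    (h _ _ (by decide)) (h _ _ (by decide))
  rwa [e] at this

set_option maxRecDepth 100000 in
set_option maxHeartbeats 2000000 in
theorem pair_aux : ∀ (i j : Fin 7) (x : Col),
    (∀ k, k ≠ i → k ≠ j → ok x (zc j k) (zc i k) = true) → x = zc i j := by
  decide

theorem blowup {n : ℕ} (c : Coloring n) (H : Good c) (h7 : Has7 c) :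
    ∃ p : Fin n → Fin 7, ∀ v w, v ≠ w → c.col v w = zc (p v) (p w) := by
  obtain ⟨g, ginj, hg⟩ := h7
  have ex : ∀ v, ∃ i, ∀ j, j ≠ i → v ≠ g j ∧ c.col v (g j) = zc i j := by
    intro v
    by_cases hv : ∃ i, v = g i
    · obtain ⟨i, rfl⟩ := hv
      exact ⟨i, fun j hj => ⟨fun e => hj (ginj e).symm, hg i j hj.symm⟩⟩
    · push Not at hv
      obtain ⟨i, hi⟩ := attach (fun j => c.col v (g j)) (by
        intro i j hij
        have := H v (g i) (g j) (hv i) (fun e => hij (ginj e)) (hv j)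
        rwa [hg i j hij] at this)
      exact ⟨i, fun j hj => ⟨hv j, hi j hj⟩⟩
  choose p hp using ex
  refine ⟨p, fun v w hvw => pair_aux _ _ _ ?_⟩
  intro k h1 h2
  obtain ⟨a1, a2⟩ := hp v k h1
  obtain ⟨b1, b2⟩ := hp w k h2
  have := H v w (g k) hvw b1 a1
  rwa [a2, b2] at this

theorem lower_s16 {n : ℕ} (hn : 7 ≤ n) (c : Coloring n) (H : Good c) :
    (3 * n + 6) / 7 + (if n % 7 = 2 then 1 else 0) ≤ h2 c := by
  rcases half_or_has7 c H with h | h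
  · split_ifs <;> omega
  obtain ⟨p, hp⟩ := blowup c H h
  have tri : ∀ (x : Col) (i j k : Fin 7), i ≠ j → i ≠ k → j ≠ k → x ≠ .y →
      zc i j ≠ x → zc i k ≠ x → zc j k ≠ x →
      (Finset.univ.filter (fun v => p v = i)).card + (Finset.univ.filter (fun v => p v = j)).card
        + (Finset.univ.filter (fun v => p v = k)).card ≤ h2 c := by
    intro x i j k hij hik hjk hx h1 h2 h3
    have := card_le_h2 c (Finset.univ.filter (fun v => p v ∈ ({i, j, k} : Finset (Fin 7)))) ⟨x, by
      intro v hv w hw hvw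
      simp only [Finset.mem_filter, Finset.mem_univ, true_and, Finset.mem_insert,
        Finset.mem_singleton] at hv hw
      rw [hp v w hvw]
      have zz : ∀ i, zc i i = .y := by decide
      have s1 := zc_symm i j
      have s2 := zc_symm i k
      have s3 := zc_symm j k
      rcases hv with e | e | e <;> rcases hw with e' | e' | e' <;> rw [e, e'] <;> simp_all [Ne.symm]⟩
    have e := Finset.card_eq_sum_card_fiberwise (f := p)
      (s := Finset.univ.filter (fun v => p v ∈ ({i, j, k} : Finset (Fin 7)))) (t := {i, j, k})
      (by intro v hv; simpa using hv)
    rw [Finset.sum_insert (by simp [hij, hik]), Finset.sum_insert (by simp [hjk]),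
      Finset.sum_singleton] at e
    have fib : ∀ a ∈ ({i, j, k} : Finset (Fin 7)),
        (Finset.univ.filter (fun v => p v ∈ ({i, j, k} : Finset (Fin 7)))).filter (fun v => p v = a)
          = Finset.univ.filter (fun v => p v = a) := by
      intro a ha
      ext v
      simp only [Finset.mem_filter, Finset.mem_univ, true_and]
      exact ⟨fun h => h.2, fun h => ⟨h ▸ ha, h⟩⟩
    rw [fib i (by simp), fib j (by simp), fib k (by simp)] at e
    omega
  have tot : ∑ i : Fin 7, (Finset.univ.filter (fun v => p v = i)).card = n := by
    rw [← Finset.card_eq_sum_card_fiberwise (f := p) (by intro v _; simp)]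
    simp
  rw [Fin.sum_univ_seven] at tot
  have R := fun i => tri .r i (i + 2) (i + 4)
  have B := fun i => tri .b i (i + 1) (i + 4)
  have R' : ∀ i : Fin 7, _ := fun i => R i (by revert i; decide) (by revert i; decide)
    (by revert i; decide) (by decide) (by revert i; decide) (by revert i; decide)
    (by revert i; decide)
  have B' : ∀ i : Fin 7, _ := fun i => B i (by revert i; decide) (by revert i; decide)
    (by revert i; decide) (by decide) (by revert i; decide) (by revert i; decide)
    (by revert i; decide)
  generalize (fun i => (Finset.univ.filter (fun v => p v = i)).card) = W at *
  have r0 := R' 0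
  have r1 := R' 1
  have r2 := R' 2
  have r3 := R' 3
  have r4 := R' 4
  have r5 := R' 5
  have r6 := R' 6
  have b0 := B' 0
  have b1 := B' 1
  have b2 := B' 2
  have b3 := B' 3
  have b4 := B' 4
  have b5 := B' 5
  have b6 := B' 6
  simp only [Fin.reduceAdd] at r0 r1 r2 r3 r4 r5 r6 b0 b1 b2 b3 b4 b5 b6
  clear R B R' B' tri
  split_ifs <;> omega

/-- Residue class modulo 7. -/
def res7 {n : ℕ} (v : Fin n) : Fin 7 := ⟨v.val % 7, Nat.mod_lt _ (by norm_num)⟩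

/-- The extremal coloring. -/
def extremal (n : ℕ) : Coloring n where
  col u v := zc (res7 u) (res7 v)
  symm u v := zc_symm _ _

theorem fiber_le {n : ℕ} (S : Finset (Fin n)) (i : Fin 7) :
    (S.filter (fun v => res7 v = i)).card ≤ (n + 6 - i) / 7 := by
  rw [← Finset.card_range ((n + 6 - i) / 7)]
  have key : ∀ v : Fin n, res7 v = i → (v : ℕ) % 7 = i := by
    intro v h; rw [← h]; rfl
  apply Finset.card_le_card_of_injOn (fun v : Fin n => (v : ℕ) / 7)
  · intro v hv
    simp only [Finset.coe_filter, Set.mem_ofPred_eq] at hv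
    have := key v hv.2
    have := v.2
    simp only [Finset.coe_range, Set.mem_Iio]
    omega
  · intro v hv w hw e
    simp only [Finset.coe_filter, Set.mem_ofPred_eq] at hv hw
    have h1 := key v hv.2
    have h2 := key w hw.2
    simp only at e
    apply Fin.ext
    omega

set_option maxRecDepth 100000 in
set_option maxHeartbeats 2000000 in
theorem free_y : ∀ T : Finset (Fin 7), (∀ i ∈ T, ∀ j ∈ T, i ≠ j → zc i j ≠ .y) → T.card ≤ 3 := by
  decide

set_option maxRecDepth 100000 in
set_option maxHeartbeats 2000000 in
theorem free_r : ∀ T : Finset (Fin 7), (∀ i ∈ T, ∀ j ∈ T, i ≠ j → zc i j ≠ .r) →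
    ∃ i : Fin 7, T ⊆ {i, i + 2, i + 4} := by
  decide

set_option maxRecDepth 100000 in
set_option maxHeartbeats 2000000 in
theorem free_b : ∀ T : Finset (Fin 7), (∀ i ∈ T, ∀ j ∈ T, i ≠ j → zc i j ≠ .b) →
    ∃ i : Fin 7, T ⊆ {i, i + 1, i + 4} := by
  decide

theorem upper {n : ℕ} (hn : 7 ≤ n) :
    h2 (extremal n) ≤ (3 * n + 6) / 7 + (if n % 7 = 2 then 1 else 0) := by
  apply h2_le
  rintro S ⟨x, hx⟩
  have himg : ∀ i ∈ S.image res7, ∀ j ∈ S.image res7, i ≠ j → zc i j ≠ x := by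
    intro i hi j hj hij
    obtain ⟨v, hv, rfl⟩ := Finset.mem_image.1 hi
    obtain ⟨w, hw, rfl⟩ := Finset.mem_image.1 hj
    exact hx v hv w hw (fun e => hij (by rw [e]))
  have hsum : ∀ A : Finset (Fin 7), S.image res7 ⊆ A →
      S.card ≤ ∑ i ∈ A, (n + 6 - (i : ℕ)) / 7 := by
    intro A hA
    rw [Finset.card_eq_sum_card_fiberwise (f := res7) (t := A)
      (fun v hv => hA (Finset.mem_image_of_mem _ hv))]
    exact Finset.sum_le_sum fun i _ => fiber_le S i
  have hmod : n % 7 = 0 ∨ n % 7 = 1 ∨ n % 7 = 2 ∨ n % 7 = 3 ∨ n % 7 = 4 ∨ n % 7 = 5 ∨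
      n % 7 = 6 := by omega
  cases x with
  | r =>
    obtain ⟨i, hi⟩ := free_r _ himg
    have := hsum _ hi
    rw [Finset.sum_insert (by clear hi this; revert i; decide),
      Finset.sum_insert (by clear hi this; revert i; decide),
      Finset.sum_singleton] at this
    fin_cases i <;> simp at this <;> rcases hmod with h | h | h | h | h | h | h <;>
      simp only [h] <;> norm_num <;> omega
  | b =>
    obtain ⟨i, hi⟩ := free_b _ himg
    have := hsum _ hi
    rw [Finset.sum_insert (by clear hi this; revert i; decide),
      Finset.sum_insert (by clear hi this; revert i; decide),
      Finset.sum_singleton] at this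
    fin_cases i <;> simp at this <;> rcases hmod with h | h | h | h | h | h | h <;>
      simp only [h] <;> norm_num <;> omega
  | y =>
    have h3 := free_y _ himg
    rw [Finset.card_image_of_injOn] at h3
    · split_ifs <;> omega
    · intro v hv w hw e
      by_contra hne
      refine hx v hv w hw hne ?_
      have zz : ∀ i, zc i i = .y := by decide
      change zc (res7 v) (res7 w) = _
      rw [e]; exact zz _

theorem stmt16 (n : ℕ) (hn : 7 ≤ n) :
    h2n n {Prrr, Pbbr, Pyyb}
      = (3 * n + 6) / 7 + (if n % 7 = 2 then 1 else 0) := by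
  have hav : Avoids (extremal n) {Prrr, Pbbr, Pyyb} := by
    rw [avoids_iff]
    intro u v w _ _ _
    exact zc_ok _ _ _
  apply le_antisymm
  · exact le_trans (Nat.sInf_le ⟨extremal n, hav, rfl⟩) (upper hn)
  · apply le_csInf
    · exact ⟨_, extremal n, hav, rfl⟩
    · rintro m ⟨c, hc, rfl⟩
      exact lower_s16 hn c ((avoids_iff c).1 hc)
end
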